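/- Let R > 0 and 3R/2 ≤ s < t ≤ 2R, let v : ℝ³ → ℝ³ be a smooth vector field and θ : ℝ³ → ℝ a smooth function, and set J₆ = (1/(t−s)) ∫_{B_t ∖ B_s} |v||θ| dx. Let q ∈ [1, 2) and r ∈ [1, 2). Then for every δ > 0 and σ > 0 there exists a constant C_{δ,σ} > 0, depending only on q, r, δ, σ (and not on v, θ, R, s, t), such that J₆ ≤ δ‖v‖²_{L⁶(B_t ∖ B_R)} + σ‖θ‖²_{L⁶(B_t ∖ B_R)} + C_{δ,σ} (t−s)^{−(6−q)(6−r)/(q(6−r)+r(6−q))} ‖v‖_{L^q(B_{2R} ∖ B_R)}^{2q(6−r)/(q(6−r)+r(6−q))} ‖θ‖_{L^r(B_{2R} ∖ B_R)}^{2r(6−q)/(q(6−r)+r(6−q))}. -/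

import Mathlib

open MeasureTheory Filter Metric

noncomputable section

/-- `L^p` norm of a scalar function on a set `E ⊆ ℝ³`. -/
def lpS (g : EuclideanSpace ℝ (Fin 3) → ℝ) (p : ℝ) (E : Set (EuclideanSpace ℝ (Fin 3))) : ℝ :=
  (∫ x in E, |g x| ^ p) ^ (1 / p)

/-!
By Cauchy–Schwarz, `∫ |v||θ| ≤ ‖v‖₂ ‖θ‖₂`. As `L²` lies between `L^q` and `L^p`, each factor is at
most `‖v‖_q ^ a * ‖v‖_p ^ (1 - a)`, respectively `‖θ‖_r ^ b * ‖θ‖_p ^ (1 - b)`. Young's inequality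
with weights `(1 - a) / 2`, `(1 - b) / 2` and `(a + b) / 2` then absorbs the `L^p` norms into
`δ ‖v‖_p ^ 2 + σ ‖θ‖_p ^ 2`.
-/

open scoped ENNReal

lemma rpow_mul_rpow_mul_le_add {w₁ w₂ w₃ δ σ x y z : ℝ} (hw₁ : 0 ≤ w₁) (hw₂ : 0 ≤ w₂)
    (hw₃ : 0 < w₃) (hw : w₁ + w₂ + w₃ = 1) (hδ : 0 < δ) (hσ : 0 < σ) (hx : 0 ≤ x) (hy : 0 ≤ y)
    (hz : 0 ≤ z) :
    x ^ w₁ * y ^ w₂ * z ≤ δ * x + σ * y + (δ ^ (-w₁) * σ ^ (-w₂) * z) ^ w₃⁻¹ := by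
  set P := (δ ^ (-w₁) * σ ^ (-w₂) * z) ^ w₃⁻¹
  have hP₀ : 0 ≤ P := by positivity
  have hPw : P ^ w₃ = δ ^ (-w₁) * σ ^ (-w₂) * z := Real.rpow_inv_rpow (by positivity) hw₃.ne'
  have cancel {u : ℝ} (hu : 0 < u) (w : ℝ) : u ^ w * u ^ (-w) = 1 := by
    rw [← Real.rpow_add hu, add_neg_cancel, Real.rpow_zero]
  calc x ^ w₁ * y ^ w₂ * z
      = (δ ^ w₁ * δ ^ (-w₁)) * (σ ^ w₂ * σ ^ (-w₂)) * (x ^ w₁ * y ^ w₂ * z) := by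
        rw [cancel hδ, cancel hσ, one_mul, one_mul]
    _ = (δ * x) ^ w₁ * (σ * y) ^ w₂ * P ^ w₃ := by
        rw [Real.mul_rpow hδ.le hx, Real.mul_rpow hσ.le hy, hPw]
        ring
    _ ≤ w₁ * (δ * x) + w₂ * (σ * y) + w₃ * P :=
        Real.geom_mean_le_arith_mean3_weighted hw₁ hw₂ hw₃.le (by positivity) (by positivity)
          hP₀ hw
    _ ≤ δ * x + σ * y + P := by
        gcongr ?_ + ?_ + ?_ <;> exact mul_le_of_le_one_left (by positivity) (by linarith)

lemma one_div_mul_rpow_mul_rpow_le_add {a b δ σ d x x' y y' : ℝ} (ha : a ≤ 1) (hb : b ≤ 1)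
    (hab : 0 < a + b) (hδ : 0 < δ) (hσ : 0 < σ) (hd : 0 < d) (hx : 0 ≤ x)
    (hx' : 0 ≤ x') (hy : 0 ≤ y) (hy' : 0 ≤ y') :
    1 / d * ((x ^ a * x' ^ (1 - a)) * (y ^ b * y' ^ (1 - b))) ≤
      δ * x' ^ 2 + σ * y' ^ 2 +
        (δ ^ (-((1 - a) / 2)) * σ ^ (-((1 - b) / 2))) ^ (2 / (a + b)) *
          d ^ (-(2 / (a + b))) * x ^ (2 * a / (a + b)) * y ^ (2 * b / (a + b)) := by
  have sq_rpow_half {u : ℝ} (hu : 0 ≤ u) (c : ℝ) : (u ^ 2) ^ (c / 2) = u ^ c := by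
    rw [← Real.rpow_natCast_mul hu, Nat.cast_ofNat, mul_div_cancel₀ c two_ne_zero]
  have rpow_factor : (d⁻¹ * x ^ a * y ^ b) ^ (2 / (a + b)) =
      d ^ (-(2 / (a + b))) * x ^ (2 * a / (a + b)) * y ^ (2 * b / (a + b)) := by
    rw [Real.mul_rpow (by positivity) (by positivity),
      Real.mul_rpow (by positivity) (by positivity), Real.inv_rpow hd.le, ← Real.rpow_neg hd.le,
      ← Real.rpow_mul hx, ← Real.rpow_mul hy]
    ring_nf
  have young := rpow_mul_rpow_mul_le_add (w₁ := (1 - a) / 2) (w₂ := (1 - b) / 2)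
    (w₃ := (a + b) / 2) (z := d⁻¹ * x ^ a * y ^ b) (by linarith) (by linarith) (by linarith)
    (by ring) hδ hσ (sq_nonneg x') (sq_nonneg y') (by positivity)
  rw [sq_rpow_half hx', sq_rpow_half hy', inv_div,
    Real.mul_rpow (by positivity) (by positivity), rpow_factor] at young
  convert young using 1 <;> ring

section LpNorm

variable {X E F : Type*} [MeasurableSpace X] [NormedAddCommGroup E] [NormedAddCommGroup F]
  {μ ν ν' : Measure X} {f : X → E} {g : X → F} {p q r s : ℝ≥0∞} {a b : ℝ}

lemma integral_norm_mul_norm_le_lpNorm_mul_lpNorm [p.HolderConjugate q] (hf : MemLp f p μ)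
    (hg : MemLp g q μ) : ∫ x, ‖f x‖ * ‖g x‖ ∂μ ≤ lpNorm f p μ * lpNorm g q μ := by
  have hfg : AEStronglyMeasurable (fun x ↦ ‖f x‖ * ‖g x‖) μ := hf.1.norm.mul hg.1.norm
  have holder : eLpNorm (fun x ↦ ‖f x‖ * ‖g x‖) 1 μ ≤ eLpNorm f p μ * eLpNorm g q μ := by
    simpa only [eLpNorm_norm] using!
      eLpNorm_smul_le_mul_eLpNorm (p := p) (q := q) (r := 1) hg.1.norm hf.1.norm
  calc ∫ x, ‖f x‖ * ‖g x‖ ∂μ = (eLpNorm (fun x ↦ ‖f x‖ * ‖g x‖) 1 μ).toReal := by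
        simp only [toReal_eLpNorm hfg, lpNorm_one_eq_integral_norm hfg, norm_mul, norm_norm]
    _ ≤ (eLpNorm f p μ * eLpNorm g q μ).toReal :=
        ENNReal.toReal_mono (ENNReal.mul_ne_top hf.eLpNorm_ne_top hg.eLpNorm_ne_top) holder
    _ = lpNorm f p μ * lpNorm g q μ := by
        rw [ENNReal.toReal_mul, toReal_eLpNorm hf.1, toReal_eLpNorm hg.1]

lemma eLpNorm_le_eLpNorm_rpow_mul_eLpNorm_rpow (ha : 0 ≤ a) (hb : 0 ≤ b) (hab : a + b = 1)
    (hs : s⁻¹ = ENNReal.ofReal a * q⁻¹ + ENNReal.ofReal b * p⁻¹)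
    (hf : AEStronglyMeasurable f μ) :
    eLpNorm f s μ ≤ eLpNorm f q μ ^ a * eLpNorm f p μ ^ b := by
  rcases ha.eq_or_lt with rfl | ha
  · obtain rfl : b = 1 := by linarith
    obtain rfl : s = p := by simpa using hs
    simp
  rcases hb.eq_or_lt with rfl | hb
  · obtain rfl : a = 1 := by linarith
    obtain rfl : s = q := by simpa using hs
    simp
  have ha₀ : ENNReal.ofReal a ≠ 0 := (ENNReal.ofReal_pos.2 ha).ne'
  have hb₀ : ENNReal.ofReal b ≠ 0 := (ENNReal.ofReal_pos.2 hb).ne'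
  have hfa : AEStronglyMeasurable (fun x ↦ ‖f x‖ ^ a) μ :=
    (hf.norm.aemeasurable.pow_const a).aestronglyMeasurable
  have hfb : AEStronglyMeasurable (fun x ↦ ‖f x‖ ^ b) μ :=
    (hf.norm.aemeasurable.pow_const b).aestronglyMeasurable
  have : ENNReal.HolderTriple (q / ENNReal.ofReal a) (p / ENNReal.ofReal b) s := ⟨by
    rw [hs, ENNReal.inv_div (.inl ENNReal.ofReal_ne_top) (.inl ha₀),
      ENNReal.inv_div (.inl ENNReal.ofReal_ne_top) (.inl hb₀), div_eq_mul_inv, div_eq_mul_inv]⟩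
  have hsplit (x : X) : ‖f x‖ = ‖f x‖ ^ a * ‖f x‖ ^ b := by
    rw [← Real.rpow_add_of_nonneg (norm_nonneg _) ha.le hb.le, hab, Real.rpow_one]
  calc eLpNorm f s μ = eLpNorm ((fun x ↦ ‖f x‖ ^ a) • fun x ↦ ‖f x‖ ^ b) s μ := by
        rw [← eLpNorm_norm f]
        exact congrArg (eLpNorm · s μ) (funext hsplit)
    _ ≤ eLpNorm (fun x ↦ ‖f x‖ ^ a) (q / ENNReal.ofReal a) μ *
          eLpNorm (fun x ↦ ‖f x‖ ^ b) (p / ENNReal.ofReal b) μ :=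
        eLpNorm_smul_le_mul_eLpNorm hfb hfa
    _ = eLpNorm f q μ ^ a * eLpNorm f p μ ^ b := by
        rw [eLpNorm_norm_rpow f ha, eLpNorm_norm_rpow f hb,
          ENNReal.div_mul_cancel ha₀ ENNReal.ofReal_ne_top,
          ENNReal.div_mul_cancel hb₀ ENNReal.ofReal_ne_top]

lemma memLp_of_memLp_of_memLp (ha : 0 ≤ a) (hb : 0 ≤ b) (hab : a + b = 1)
    (hs : s⁻¹ = ENNReal.ofReal a * q⁻¹ + ENNReal.ofReal b * p⁻¹) (hfq : MemLp f q μ)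
    (hfp : MemLp f p μ) : MemLp f s μ :=
  ⟨hfq.1, (eLpNorm_le_eLpNorm_rpow_mul_eLpNorm_rpow ha hb hab hs hfq.1).trans_lt <|
    ENNReal.mul_lt_top (ENNReal.rpow_lt_top_of_nonneg ha hfq.eLpNorm_ne_top)
      (ENNReal.rpow_lt_top_of_nonneg hb hfp.eLpNorm_ne_top)⟩

lemma lpNorm_le_lpNorm_rpow_mul_lpNorm_rpow (ha : 0 ≤ a) (hb : 0 ≤ b) (hab : a + b = 1)
    (hs : s⁻¹ = ENNReal.ofReal a * q⁻¹ + ENNReal.ofReal b * p⁻¹) (hμν : μ ≤ ν) (hμν' : μ ≤ ν')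
    (hfq : MemLp f q ν') (hfp : MemLp f p ν) :
    lpNorm f s μ ≤ lpNorm f q ν' ^ a * lpNorm f p ν ^ b := by
  have hf : AEStronglyMeasurable f μ := (hfq.mono_measure hμν').1
  have interpolation : eLpNorm f s μ ≤ eLpNorm f q ν' ^ a * eLpNorm f p ν ^ b :=
    (eLpNorm_le_eLpNorm_rpow_mul_eLpNorm_rpow ha hb hab hs hf).trans <| by gcongr
  rw [← toReal_eLpNorm hf, ← toReal_eLpNorm hfq.1, ← toReal_eLpNorm hfp.1, ENNReal.toReal_rpow,
    ENNReal.toReal_rpow, ← ENNReal.toReal_mul]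
  exact ENNReal.toReal_mono
    (ENNReal.mul_ne_top (ENNReal.rpow_ne_top_of_nonneg ha hfq.eLpNorm_ne_top)
      (ENNReal.rpow_ne_top_of_nonneg hb hfp.eLpNorm_ne_top)) interpolation

lemma integral_norm_mul_norm_le_of_interpolation (ha : 0 ≤ a) (ha' : a ≤ 1)
    (hb : 0 ≤ b) (hb' : b ≤ 1)
    (hq : 2⁻¹ = ENNReal.ofReal a * q⁻¹ + ENNReal.ofReal (1 - a) * p⁻¹)
    (hr : 2⁻¹ = ENNReal.ofReal b * r⁻¹ + ENNReal.ofReal (1 - b) * s⁻¹)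
    (hμν : μ ≤ ν) (hμν' : μ ≤ ν') (hfq : MemLp f q ν') (hfp : MemLp f p ν)
    (hgr : MemLp g r ν') (hgs : MemLp g s ν) :
    ∫ x, ‖f x‖ * ‖g x‖ ∂μ ≤
      (lpNorm f q ν' ^ a * lpNorm f p ν ^ (1 - a)) *
        (lpNorm g r ν' ^ b * lpNorm g s ν ^ (1 - b)) := by
  have ha₁ : 0 ≤ 1 - a := sub_nonneg.2 ha'
  have hb₁ : 0 ≤ 1 - b := sub_nonneg.2 hb'
  have hf₂ : MemLp f 2 μ := memLp_of_memLp_of_memLp ha ha₁ (add_sub_cancel _ _) hq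
    (hfq.mono_measure hμν') (hfp.mono_measure hμν)
  have hg₂ : MemLp g 2 μ := memLp_of_memLp_of_memLp hb hb₁ (add_sub_cancel _ _) hr
    (hgr.mono_measure hμν') (hgs.mono_measure hμν)
  calc ∫ x, ‖f x‖ * ‖g x‖ ∂μ ≤ lpNorm f 2 μ * lpNorm g 2 μ :=
        integral_norm_mul_norm_le_lpNorm_mul_lpNorm hf₂ hg₂
    _ ≤ _ := mul_le_mul
        (lpNorm_le_lpNorm_rpow_mul_lpNorm_rpow ha ha₁ (add_sub_cancel _ _) hq hμν hμν' hfq hfp)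
        (lpNorm_le_lpNorm_rpow_mul_lpNorm_rpow hb hb₁ (add_sub_cancel _ _) hr hμν hμν' hgr hgs)
        lpNorm_nonneg
        (mul_nonneg (Real.rpow_nonneg lpNorm_nonneg _) (Real.rpow_nonneg lpNorm_nonneg _))

end LpNorm

section L2Weight

/-- The weight `a` of `L^q` in the interpolation of `L²` between `L^q` and `L^p`, that is, the
solution of `1 / 2 = a / q + (1 - a) / p`. -/
def l2Weight (p q : ℝ) : ℝ :=
  q * (p - 2) / (2 * (p - q))

variable {p q r : ℝ}

lemma l2Weight_pos (hp : 2 < p) (hq₀ : 0 < q) (hq : q < p) : 0 < l2Weight p q :=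
  div_pos (mul_pos hq₀ (by linarith)) (by linarith)

lemma l2Weight_le_one (hp : 2 < p) (hq : q ≤ 2) : l2Weight p q ≤ 1 := by
  rw [l2Weight, div_le_one (by linarith)]
  nlinarith

lemma inv_two_eq_l2Weight (hp : 2 < p) (hq₀ : 0 < q) (hq : q ≤ 2) :
    (2 : ℝ≥0∞)⁻¹ = ENNReal.ofReal (l2Weight p q) * (ENNReal.ofReal q)⁻¹ +
      ENNReal.ofReal (1 - l2Weight p q) * (ENNReal.ofReal p)⁻¹ := by
  have hp₀ : 0 < p := by linarith
  have hpq : p - q ≠ 0 := by linarith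
  have ha := l2Weight_pos hp hq₀ (hq.trans_lt hp)
  have ha' : 0 ≤ 1 - l2Weight p q := sub_nonneg.2 (l2Weight_le_one hp hq)
  have hreal : (2 : ℝ)⁻¹ = l2Weight p q * q⁻¹ + (1 - l2Weight p q) * p⁻¹ := by
    rw [l2Weight]
    field_simp
    ring
  rw [← ENNReal.ofReal_inv_of_pos hq₀, ← ENNReal.ofReal_inv_of_pos hp₀,
    ← ENNReal.ofReal_mul ha.le, ← ENNReal.ofReal_mul ha',
    ← ENNReal.ofReal_add (by positivity) (by positivity), ← hreal,
    ENNReal.ofReal_inv_of_pos two_pos, ENNReal.ofReal_ofNat]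

lemma l2Weight_add (hq : q ≠ p) (hr : r ≠ p) :
    l2Weight p q + l2Weight p r =
      (p - 2) / 2 * ((q * (p - r) + r * (p - q)) / ((p - q) * (p - r))) := by
  have := sub_ne_zero.2 hq.symm
  have := sub_ne_zero.2 hr.symm
  simp only [l2Weight]
  field_simp

lemma two_div_l2Weight_add (hq : q ≠ p) (hr : r ≠ p) :
    2 / (l2Weight p q + l2Weight p r) =
      4 / (p - 2) * ((p - q) * (p - r) / (q * (p - r) + r * (p - q))) := by
  rw [l2Weight_add hq hr, ← div_div, div_div_eq_mul_div, div_div_eq_mul_div]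
  ring

lemma two_mul_l2Weight_div_add (hp : p ≠ 2) (hq : q ≠ p) (hr : r ≠ p) :
    2 * l2Weight p q / (l2Weight p q + l2Weight p r) =
      2 * q * (p - r) / (q * (p - r) + r * (p - q)) := by
  have := sub_ne_zero.2 hp
  have := sub_ne_zero.2 hq.symm
  have := sub_ne_zero.2 hr.symm
  rw [l2Weight_add hq hr, l2Weight]
  field_simp

end L2Weight

lemma memLp_restrict_of_continuous_of_isBounded {X F : Type*} [PseudoMetricSpace X]
    [ProperSpace X] [MeasurableSpace X] [OpensMeasurableSpace X] [NormedAddCommGroup F]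
    {μ : Measure X} [IsFiniteMeasureOnCompacts μ] {f : X → F} {s : Set X} {p : ℝ≥0∞}
    (hf : Continuous f) (hs : Bornology.IsBounded s) : MemLp f p (μ.restrict s) := by
  have hK : IsCompact (closure s) := hs.isCompact_closure
  have : IsFiniteMeasure (μ.restrict (closure s)) := ⟨by simpa using hK.measure_lt_top⟩
  obtain ⟨M, hM⟩ := hK.exists_bound_of_continuousOn hf.continuousOn
  have hclosure : MemLp f p (μ.restrict (closure s)) :=
    MemLp.of_bound hf.aestronglyMeasurable M
      (ae_restrict_of_forall_mem isClosed_closure.measurableSet hM)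
  exact hclosure.mono_measure (Measure.restrict_mono_set μ subset_closure)

lemma lpS_eq_lpNorm {g : EuclideanSpace ℝ (Fin 3) → ℝ} {p : ℝ}
    {E : Set (EuclideanSpace ℝ (Fin 3))} (hp : 0 < p)
    (hg : AEStronglyMeasurable g (volume.restrict E)) :
    lpS g p E = lpNorm g (.ofReal p) (volume.restrict E) := by
  rw [lpNorm_eq_integral_norm_rpow_toReal (by simpa using hp) ENNReal.ofReal_ne_top hg,
    ENNReal.toReal_ofReal hp.le]
  simp only [lpS, one_div, Real.norm_eq_abs]

theorem J6_estimate_i_general {p q r : ℝ} (hp : 2 < p) (hq₀ : 0 < q) (hq : q ≤ 2) (hr₀ : 0 < r)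
    (hr : r ≤ 2) {δ σ : ℝ} (hδ : 0 < δ) (hσ : 0 < σ) :
    ∃ C : ℝ, 0 < C ∧
      ∀ {X E F : Type*} [MeasurableSpace X] [NormedAddCommGroup E] [NormedAddCommGroup F]
        {μ ν ν' : Measure X} {v : X → E} {θ : X → F} {d : ℝ}, μ ≤ ν → μ ≤ ν' → 0 < d →
        MemLp v (.ofReal p) ν → MemLp θ (.ofReal p) ν →
        MemLp v (.ofReal q) ν' → MemLp θ (.ofReal r) ν' →
        (1 / d) * (∫ x, ‖v x‖ * ‖θ x‖ ∂μ) ≤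
          δ * lpNorm v (.ofReal p) ν ^ 2 + σ * lpNorm θ (.ofReal p) ν ^ 2
          + C * d ^ (-(4 / (p - 2) * ((p - q) * (p - r) / (q * (p - r) + r * (p - q)))))
            * lpNorm v (.ofReal q) ν' ^ (2 * q * (p - r) / (q * (p - r) + r * (p - q)))
            * lpNorm θ (.ofReal r) ν' ^ (2 * r * (p - q) / (q * (p - r) + r * (p - q))) := by
  have hqp : q < p := hq.trans_lt hp
  have hrp : r < p := hr.trans_lt hp
  have ha := l2Weight_pos hp hq₀ hqp
  have ha' := l2Weight_le_one hp hq
  have hb := l2Weight_pos hp hr₀ hrp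
  have hb' := l2Weight_le_one hp hr
  have v_exponent := two_mul_l2Weight_div_add hp.ne' hqp.ne hrp.ne
  have θ_exponent := two_mul_l2Weight_div_add hp.ne' hrp.ne hqp.ne
  rw [add_comm (l2Weight p r), add_comm (r * (p - q))] at θ_exponent
  rw [← two_div_l2Weight_add hqp.ne hrp.ne, ← v_exponent, ← θ_exponent]
  refine ⟨(δ ^ (-((1 - l2Weight p q) / 2)) * σ ^ (-((1 - l2Weight p r) / 2))) ^
    (2 / (l2Weight p q + l2Weight p r)), by positivity, ?_⟩
  intro X E F _ _ _ μ ν ν' v θ d hμν hμν' hd hvp hθp hvq hθr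
  have interpolation := integral_norm_mul_norm_le_of_interpolation ha.le ha' hb.le hb'
    (inv_two_eq_l2Weight hp hq₀ hq) (inv_two_eq_l2Weight hp hr₀ hr) hμν hμν' hvq hvp hθr hθp
  exact (mul_le_mul_of_nonneg_left interpolation (by positivity)).trans
    (one_div_mul_rpow_mul_rpow_le_add ha' hb' (add_pos ha hb) hδ hσ hd lpNorm_nonneg lpNorm_nonneg
      lpNorm_nonneg lpNorm_nonneg)

theorem J6_estimate_i (q r : ℝ) (hq1 : 1 ≤ q) (hq2 : q < 2) (hr1 : 1 ≤ r) (hr2 : r < 2)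
    (δ σ : ℝ) (hδ : 0 < δ) (hσ : 0 < σ) :
    ∃ C : ℝ, 0 < C ∧
      ∀ (R s t : ℝ) (v : EuclideanSpace ℝ (Fin 3) → EuclideanSpace ℝ (Fin 3))
        (θ : EuclideanSpace ℝ (Fin 3) → ℝ),
        0 < R → 3 * R / 2 ≤ s → s < t → t ≤ 2 * R →
        ContDiff ℝ (⊤ : ℕ∞) v → ContDiff ℝ (⊤ : ℕ∞) θ →
        (1 / (t - s)) * (∫ x in ball (0 : EuclideanSpace ℝ (Fin 3)) t \ ball 0 s,
            ‖v x‖ * |θ x|) ≤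
          δ * lpS (fun x => ‖v x‖) 6 (ball 0 t \ ball 0 R) ^ 2
          + σ * lpS θ 6 (ball 0 t \ ball 0 R) ^ 2
          + C * (t - s) ^ (-((6 - q) * (6 - r) / (q * (6 - r) + r * (6 - q))))
            * lpS (fun x => ‖v x‖) q (ball 0 (2 * R) \ ball 0 R)
                ^ (2 * q * (6 - r) / (q * (6 - r) + r * (6 - q)))
            * lpS θ r (ball 0 (2 * R) \ ball 0 R)
                ^ (2 * r * (6 - q) / (q * (6 - r) + r * (6 - q))) := by
  obtain ⟨C, hC, estimate⟩ := J6_estimate_i_general (p := 6) (by norm_num) (by linarith : 0 < q)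
    hq2.le (by linarith : 0 < r) hr2.le hδ hσ
  refine ⟨C, hC, fun R s t v θ hR hs hst ht hv hθ ↦ ?_⟩
  have hRs : ball (0 : EuclideanSpace ℝ (Fin 3)) R ⊆ ball 0 s :=
    ball_subset_ball (by linarith only [hR, hs])
  have memLp_v (p : ℝ≥0∞) (ρ : ℝ) : MemLp v p (volume.restrict (ball 0 ρ \ ball 0 R)) :=
    memLp_restrict_of_continuous_of_isBounded hv.continuous (isBounded_ball.subset Set.sdiff_subset)
  have memLp_θ (p : ℝ≥0∞) (ρ : ℝ) : MemLp θ p (volume.restrict (ball 0 ρ \ ball 0 R)) :=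
    memLp_restrict_of_continuous_of_isBounded hθ.continuous (isBounded_ball.subset Set.sdiff_subset)
  have bound := estimate
    (Measure.restrict_mono_set volume (Set.sdiff_subset_sdiff_right hRs))
    (Measure.restrict_mono_set volume (Set.sdiff_subset_sdiff (ball_subset_ball ht) hRs))
    (sub_pos.2 hst) (memLp_v _ t) (memLp_θ _ t) (memLp_v _ (2 * R)) (memLp_θ _ (2 * R))
  rw [lpS_eq_lpNorm (by norm_num) hv.continuous.norm.aestronglyMeasurable,
    lpS_eq_lpNorm (by norm_num) hθ.continuous.aestronglyMeasurable,
    lpS_eq_lpNorm (by linarith) hv.continuous.norm.aestronglyMeasurable,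
    lpS_eq_lpNorm (by linarith) hθ.continuous.aestronglyMeasurable,
    lpNorm_norm hv.continuous.aestronglyMeasurable, lpNorm_norm hv.continuous.aestronglyMeasurable]
  rwa [show (4 / (6 - 2) : ℝ) = 1 by norm_num, one_mul] at bound
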